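/- Let α ∈ ℚ(i) be nonzero. Then the rank of E_α(ℚ(i)) is even; that is, the dimension of the ℚ-vector space E_α(ℚ(i)) ⊗_ℤ ℚ is an even natural number. -/

import Mathlib

noncomputable section

open WeierstrassCurve
open scoped IntermediateField

/-- The field `ℚ(i)`, realized as the subfield of `ℂ` generated by `Complex.I` over `ℚ`. -/
abbrev QI : IntermediateField ℚ ℂ := ℚ⟮Complex.I⟯

/-- The imaginary unit `i` as an element of `ℚ(i)`. -/
def QIi : QI := ⟨Complex.I, IntermediateField.mem_adjoin_simple_self ℚ Complex.I⟩

/-- The imaginary unit `i` as a Gaussian integer, so `ℤ[i] = ℤ + ℤ·gi`. -/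
def gi : GaussianInt := ⟨0, 1⟩

/-- The canonical embedding `ℤ[i] → ℚ(i)`, sending `a + b·i` to `a + b·i`. -/
def toQI (z : GaussianInt) : QI := (z.re : QI) + (z.im : QI) * QIi

/-- The (Weierstrass model of the) elliptic curve `Eα : y² = x³ + α x` over `ℚ(i)`. -/
def Ecurve (α : QI) : WeierstrassCurve QI := ⟨0, 0, 0, α, 0⟩

/-- A Gaussian prime congruent to `-1 - 6i` modulo `16`. -/
def GoodPrime (π : GaussianInt) : Prop :=
  Prime π ∧ (16 : GaussianInt) ∣ (π - (-1 - 6 * gi))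

open scoped TensorProduct

/-!
Complex multiplication by `i`, namely `(x, y) ↦ (-x, iy)`, is an automorphism `j` of the group of
points with `j² = -1`. On the rational vector space `ℚ ⊗ E(ℚ(i))` this gives `det(j)² = (-1)ⁿ`,
where `n` is the dimension, so `n` is even as soon as it is finite.

Finiteness is the Mordell–Weil theorem. The naive height satisfies the parallelogram law up to a
bounded error and has the Northcott property, so it suffices that `2E` has finite index in `E`.
Since `(1 + i)² = 2i`, this reduces to the multiplication `φ` by `1 + i`. Two points whose
`x`-coordinates have the same nonzero class modulo squares are congruent modulo `φ(E)`, and if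
`α = A / B`, unique factorization in `ℤ[i]` shows that every such class contains a divisor of
`AB³`.
-/

section NaiveHeight

open WeierstrassCurve.Affine Height

variable {K : Type*} [Field K] {W : Affine K}

theorem eval_addSubMap (s t u : K) :
    (fun j ↦ (W.addSubMap j).eval ![s, t, u]) =
      ![s ^ 2 - W.b₄ * s * u - W.b₆ * t * u - W.b₈ * u ^ 2,
        2 * t * s + W.b₂ * s * u + W.b₄ * t * u + W.b₆ * u ^ 2, t ^ 2 - 4 * s * u] := by
  ext j
  fin_cases j <;> simp [addSubMap]

theorem sq_sub_mul_addX_mul_addX {x₁ y₁ x₂ y₂ : K} (hx : x₁ ≠ x₂) (h₁ : W.Equation x₁ y₁)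
    (h₂ : W.Equation x₂ y₂) :
    (x₁ - x₂) ^ 2 * (W.addX x₁ x₂ ((y₁ - y₂) / (x₁ - x₂)) *
        W.addX x₁ x₂ ((y₁ - W.negY x₂ y₂) / (x₁ - x₂))) =
      (x₁ * x₂) ^ 2 - W.b₄ * (x₁ * x₂) - W.b₆ * (x₁ + x₂) - W.b₈ := by
  rw [equation_iff] at h₁ h₂
  have hx : x₁ - x₂ ≠ 0 := sub_ne_zero.2 hx
  simp only [addX, negY, b₄, b₆, b₈]
  field_simp
  grind

theorem sq_sub_mul_addX_add_addX {x₁ y₁ x₂ y₂ : K} (hx : x₁ ≠ x₂) (h₁ : W.Equation x₁ y₁)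
    (h₂ : W.Equation x₂ y₂) :
    (x₁ - x₂) ^ 2 * (W.addX x₁ x₂ ((y₁ - y₂) / (x₁ - x₂)) +
        W.addX x₁ x₂ ((y₁ - W.negY x₂ y₂) / (x₁ - x₂))) =
      2 * (x₁ + x₂) * (x₁ * x₂) + W.b₂ * (x₁ * x₂) + W.b₄ * (x₁ + x₂) + W.b₆ := by
  rw [equation_iff] at h₁ h₂
  have hx : x₁ - x₂ ≠ 0 := sub_ne_zero.2 hx
  simp only [addX, negY, b₂, b₄, b₆]
  field_simp
  linear_combination 2 * h₁ + 2 * h₂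

theorem sq_sub_negY {x y : K} (h : W.Equation x y) :
    (y - W.negY x y) ^ 2 = 4 * x ^ 3 + W.b₂ * x ^ 2 + 2 * W.b₄ * x + W.b₆ := by
  rw [equation_iff] at h
  simp only [negY, b₂, b₄, b₆]
  linear_combination 4 * h

theorem sq_sub_negY_mul_addX_self {x y : K} (h : W.Equation x y) (hy : y ≠ W.negY x y) :
    (y - W.negY x y) ^ 2 *
        W.addX x x ((3 * x ^ 2 + 2 * W.a₂ * x + W.a₄ - W.a₁ * y) / (y - W.negY x y)) =
      x ^ 4 - W.b₄ * x ^ 2 - 2 * W.b₆ * x - W.b₈ := by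
  rw [equation_iff] at h
  have hy : y - W.negY x y ≠ 0 := sub_ne_zero.2 hy
  simp only [addX]
  field_simp
  simp only [negY, b₄, b₆, b₈]
  grind

theorem eval_addSubMap_sym2x_zero (P : W.Point) :
    (fun j ↦ (W.addSubMap j).eval (P.sym2x 0)) = P.sym2x P := by
  rcases P with _ | ⟨x, y, h⟩
  · rw [← Point.zero_def, Point.sym2x_zero_zero, eval_addSubMap]
    simp
  · rw [Point.sym2x_some_zero, Point.sym2x_some_some, eval_addSubMap]
    simp [sq, two_mul]

/-- The naive logarithmic height of a point: the height of its image under the `x`-coordinate map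
to the projective line. -/
def naiveHeight [AdmissibleAbsValues K] (P : W.Point) : ℝ :=
  logHeight P.xRep

theorem naiveHeight_nonneg [AdmissibleAbsValues K] (P : W.Point) : 0 ≤ naiveHeight P :=
  logHeight_nonneg _

variable (K) in
theorem exists_abs_logHeight_sym2x_sub_le [AdmissibleAbsValues K] :
    ∃ C : ℝ, ∀ {W : Affine K} (P Q : W.Point),
      |logHeight (P.sym2x Q) - (naiveHeight P + naiveHeight Q)| ≤ C := by
  obtain ⟨C, hC⟩ := abs_logHeight_sym2_sub_le K
  have xRep_eta {W : Affine K} (P : W.Point) : ![P.xRep 0, P.xRep 1] = P.xRep := by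
    ext j
    fin_cases j <;> rfl
  refine ⟨C, fun P Q ↦ ?_⟩
  have h := hC (xRep_eta P ▸ P.xRep_ne_zero) (xRep_eta Q ▸ Q.xRep_ne_zero)
  rwa [xRep_eta, xRep_eta] at h

theorem northcott_naiveHeight [AdmissibleAbsValues K] [Northcott (logHeight₁ (K := K))] :
    Northcott (naiveHeight : W.Point → ℝ) := by
  refine ⟨fun B ↦ Set.Finite.of_finite_fibers Point.xRep ?_ ?_⟩
  · have hfin : (insert ![1, 0] ((![·, 1]) '' {x : K | logHeight₁ x ≤ B})).Finite :=
      ((Northcott.finite_le B).image _).insert _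
    refine hfin.subset ?_
    rintro _ ⟨_ | ⟨x, y, h⟩, hP, rfl⟩
    · exact Set.mem_insert _ _
    · exact Set.mem_insert_of_mem _ ⟨x, (logHeight₁_eq_logHeight x).trans_le hP, rfl⟩
  · rintro _ ⟨P, -, rfl⟩
    exact (Set.toFinite {P, -P}).subset fun Q hQ ↦ Point.eq_or_eq_neg_of_xRep_eq_xRep hQ.2

variable [DecidableEq K]

theorem eval_addSubMap_sym2x_some_some {x₁ y₁ x₂ y₂ : K} (h₁ : W.Nonsingular x₁ y₁)
    (h₂ : W.Nonsingular x₂ y₂) (hx : x₁ ≠ x₂) :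
    (fun j ↦ (W.addSubMap j).eval ((Point.some x₁ y₁ h₁).sym2x (Point.some x₂ y₂ h₂))) =
      (x₁ - x₂) ^ 2 • (Point.some x₁ y₁ h₁ + Point.some x₂ y₂ h₂).sym2x
        (Point.some x₁ y₁ h₁ - Point.some x₂ y₂ h₂) := by
  rw [Point.sym2x_some_some, eval_addSubMap, sub_eq_add_neg (Point.some x₁ y₁ h₁), Point.neg_some,
    Point.add_of_X_ne hx, Point.add_of_X_ne hx, Point.sym2x_some_some, slope_of_X_ne hx,
    slope_of_X_ne hx, Matrix.smul_vec3]
  simp only [smul_eq_mul, sq_sub_mul_addX_mul_addX hx h₁.1 h₂.1,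
    sq_sub_mul_addX_add_addX hx h₁.1 h₂.1]
  congrm ![?_, ?_, ?_] <;> ring

theorem exists_eval_addSubMap_sym2x_self_eq_smul [W.IsElliptic] (P : W.Point) :
    ∃ c : K, c ≠ 0 ∧
      (fun j ↦ (W.addSubMap j).eval (P.sym2x P)) = c • (P + P).sym2x 0 := by
  rcases P with _ | ⟨x, y, h⟩
  · refine ⟨1, one_ne_zero, ?_⟩
    rw [← Point.zero_def, eval_addSubMap_sym2x_zero, add_zero, one_smul]
  have hsq := sq_sub_negY h.1
  by_cases hy : y = W.negY x y
  · have hne := W.addSubMap_ne_zero (Point.sym2x_ne_zero (.some x y h) (.some x y h))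
    rw [← hy, sub_self, zero_pow two_ne_zero] at hsq
    have heval : (fun j ↦ (W.addSubMap j).eval ((Point.some x y h).sym2x (.some x y h))) =
        (x ^ 4 - W.b₄ * x ^ 2 - 2 * W.b₆ * x - W.b₈) • ![1, 0, 0] := by
      rw [Point.sym2x_some_some, eval_addSubMap, Matrix.smul_vec3]
      congrm ![?_, ?_, ?_]
      · simp only [smul_eq_mul]
        ring
      · linear_combination -hsq
      · simp only [smul_eq_mul]
        ring
    rw [Point.add_of_Y_eq rfl hy, Point.sym2x_zero_zero, heval]
    exact ⟨_, fun hc ↦ hne (by rw [heval, hc, zero_smul]), rfl⟩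
  · refine ⟨(y - W.negY x y) ^ 2, pow_ne_zero 2 (sub_ne_zero.2 hy), ?_⟩
    rw [Point.sym2x_some_some, eval_addSubMap, Point.add_self_of_Y_ne hy, Point.sym2x_some_zero,
      slope_of_Y_ne rfl hy, Matrix.smul_vec3]
    simp only [smul_eq_mul, sq_sub_negY_mul_addX_self h.1 hy, mul_zero, mul_one]
    congrm ![?_, ?_, ?_]
    · ring
    · linear_combination -hsq
    · ring

theorem exists_eval_addSubMap_sym2x_eq_smul [W.IsElliptic] (P Q : W.Point) :
    ∃ c : K, c ≠ 0 ∧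
      (fun j ↦ (W.addSubMap j).eval (P.sym2x Q)) = c • (P + Q).sym2x (P - Q) := by
  by_cases hPQ : P.xRep = Q.xRep
  · rcases Point.eq_or_eq_neg_of_xRep_eq_xRep hPQ with rfl | rfl
    · simpa using exists_eval_addSubMap_sym2x_self_eq_smul P
    · obtain ⟨c, hc, h⟩ := exists_eval_addSubMap_sym2x_self_eq_smul (-Q)
      refine ⟨c, hc, ?_⟩
      rw [neg_add_cancel, Point.sym2x_comm 0, sub_eq_add_neg, ← h, Point.sym2x_neg_right]
  rcases P with _ | ⟨x₁, y₁, h₁⟩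
  · refine ⟨1, one_ne_zero, ?_⟩
    rw [← Point.zero_def, Point.sym2x_comm, eval_addSubMap_sym2x_zero, zero_add, zero_sub,
      Point.sym2x_neg_right, one_smul]
  rcases Q with _ | ⟨x₂, y₂, h₂⟩
  · refine ⟨1, one_ne_zero, ?_⟩
    rw [← Point.zero_def, eval_addSubMap_sym2x_zero, add_zero, sub_zero, one_smul]
  have hx : x₁ ≠ x₂ := fun hx ↦ hPQ (by simp [hx])
  exact ⟨_, pow_ne_zero 2 (sub_ne_zero.2 hx), eval_addSubMap_sym2x_some_some h₁ h₂ hx⟩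

theorem exists_abs_naiveHeight_parallelogram_le [AdmissibleAbsValues K] [W.IsElliptic] :
    ∃ C : ℝ, ∀ P Q : W.Point,
      |naiveHeight (P + Q) + naiveHeight (P - Q) - 2 * (naiveHeight P + naiveHeight Q)| ≤ C := by
  obtain ⟨C₁, hC₁⟩ := W.abs_logHeight_addSubMap_sub_two_mul_logHeight_le
  obtain ⟨C₂, hC₂⟩ := exists_abs_logHeight_sym2x_sub_le K
  refine ⟨C₁ + 3 * C₂, fun P Q ↦ ?_⟩
  obtain ⟨c, hc, heval⟩ := exists_eval_addSubMap_sym2x_eq_smul P Q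
  have h₁ := hC₁ (P.sym2x Q)
  rw [heval, logHeight_smul_eq_logHeight _ hc] at h₁
  have h₂ := hC₂ P Q
  have h₃ := hC₂ (P + Q) (P - Q)
  rw [abs_le] at h₁ h₂ h₃ ⊢
  constructor <;> linarith

theorem fg_point_of_finiteIndex_two_nsmul [AdmissibleAbsValues K]
    [Northcott (logHeight₁ (K := K))] [W.IsElliptic]
    (h : (nsmulAddMonoidHom (α := W.Point) 2).range.FiniteIndex) : AddGroup.FG W.Point := by
  have := northcott_naiveHeight (W := W)
  obtain ⟨C, hC⟩ := exists_abs_naiveHeight_parallelogram_le (W := W)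
  exact AddCommGroup.fg_of_descent' h naiveHeight_nonneg hC

end NaiveHeight

section FiniteIndex

variable {A B C : Type*} [AddCommGroup A] [AddCommGroup B] [AddCommGroup C]

theorem finiteIndex_of_finite_cover {H : AddSubgroup A} {𝒮 : Set (Set A)} (h𝒮 : 𝒮.Finite)
    (hcover : ∀ a, ∃ s ∈ 𝒮, a ∈ s) (hsub : ∀ s ∈ 𝒮, ∀ a ∈ s, ∀ b ∈ s, a - b ∈ H) :
    H.FiniteIndex := by
  choose f hf using hcover
  have := h𝒮.to_subtype
  rw [AddSubgroup.finiteIndex_iff_finite_quotient]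
  refine Finite.of_injective (β := 𝒮) (fun q : A ⧸ H ↦ ⟨f q.out, (hf q.out).1⟩) fun q q' h ↦ ?_
  have hmem : q.out ∈ f q'.out := Subtype.mk.inj h ▸ (hf q.out).2
  have hquot := hsub _ (hf q'.out).1 _ hmem _ (hf q'.out).2
  rwa [← QuotientAddGroup.eq_iff_sub_mem, QuotientAddGroup.out_eq', QuotientAddGroup.out_eq']
    at hquot

theorem finiteIndex_range_comp {f : A →+ B} {g : B →+ C} (hf : f.range.FiniteIndex)
    (hg : g.range.FiniteIndex) : (g.comp f).range.FiniteIndex := by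
  rw [AddMonoidHom.range_comp, AddSubgroup.finiteIndex_iff, AddSubgroup.index_map]
  exact mul_ne_zero (AddSubgroup.finiteIndex_of_le le_sup_left).index_ne_zero hg.index_ne_zero

end FiniteIndex

section AddX

open WeierstrassCurve.Affine

variable {K : Type*} [Field K] [DecidableEq K] {W : Affine K} {x₁ y₁ x₂ y₂ : K}

theorem vieta_addX_slope (h₁ : W.Equation x₁ y₁) (h₂ : W.Equation x₂ y₂)
    (hxy : ¬(x₁ = x₂ ∧ y₁ = W.negY x₂ y₂)) :
    letI l := W.slope x₁ x₂ y₁ y₂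
    x₁ * x₂ + x₁ * W.addX x₁ x₂ l + x₂ * W.addX x₁ x₂ l =
        2 * x₁ * l ^ 2 + (W.a₁ * x₁ - 2 * y₁ - W.a₃) * l + (-W.a₁ * y₁ + W.a₄) ∧
      x₁ * x₂ * W.addX x₁ x₂ l =
        x₁ ^ 2 * l ^ 2 - (2 * x₁ * y₁ + W.a₃ * x₁) * l + (y₁ ^ 2 + W.a₃ * y₁ - W.a₆) := by
  have h := addPolynomial_slope h₁ h₂ hxy
  rw [addPolynomial_eq, neg_inj, Cubic.prod_X_sub_C_eq, Cubic.toPoly_injective] at h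
  simp only [Cubic.mk.injEq] at h
  exact ⟨h.2.2.1.symm, by linear_combination h.2.2.2⟩

end AddX

section QuarticTwist

open WeierstrassCurve.Affine

/-- The curve `y² = x³ + ax`, a quartic twist of `y² = x³ + x`. -/
@[simps]
def quarticTwist {R : Type*} [CommRing R] (a : R) : WeierstrassCurve R :=
  ⟨0, 0, 0, a, 0⟩

namespace quarticTwist

section CommRing

variable {R : Type*} [CommRing R] {a i x y : R}

theorem Δ_eq (a : R) : (quarticTwist a).Δ = -64 * a ^ 3 := by
  simp only [Δ, b₂, b₄, b₆, b₈, quarticTwist]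
  ring

theorem equation_iff : (quarticTwist a).toAffine.Equation x y ↔ y ^ 2 = x ^ 3 + a * x := by
  simp [Affine.equation_iff]

theorem negY_eq (x y : R) : (quarticTwist a).toAffine.negY x y = -y := by
  simp [negY]

theorem nonsingular_neg_mul (hi : i ^ 2 = -1) (h : (quarticTwist a).toAffine.Nonsingular x y) :
    (quarticTwist a).toAffine.Nonsingular (-x) (i * y) := by
  simp only [nonsingular_iff, equation_iff, quarticTwist_a₁, quarticTwist_a₂, quarticTwist_a₃,
    quarticTwist_a₄, zero_mul, mul_zero, add_zero, sub_zero, neg_sq] at h ⊢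
  refine ⟨?_, h.2.imp_right fun hy hiy ↦ hy ?_⟩
  · linear_combination i ^ 2 * h.1 + (x ^ 3 + a * x) * hi
  · linear_combination -i * hiy + 2 * y * hi

end CommRing

variable {K : Type*} [Field K] {a i : K}

theorem ne_zero_of_sq_eq_neg_one (hi : i ^ 2 = -1) : i ≠ 0 := by
  rintro rfl
  simp at hi

theorem isElliptic (ha : a ≠ 0) (h2 : (2 : K) ≠ 0) : (quarticTwist a).IsElliptic := by
  refine ⟨?_⟩
  rw [Δ_eq, show (-64 : K) = -2 ^ 6 by norm_num]
  exact (mul_ne_zero (neg_ne_zero.2 (pow_ne_zero 6 h2)) (pow_ne_zero 3 ha)).isUnit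

theorem ne_zero_of_isElliptic [(quarticTwist a).IsElliptic] : a ≠ 0 := by
  rintro rfl
  simpa [Δ_eq] using (quarticTwist (0 : K)).isUnit_Δ

theorem two_ne_zero_of_isElliptic [(quarticTwist a).IsElliptic] : (2 : K) ≠ 0 := by
  intro h2
  have := (quarticTwist a).isUnit_Δ.ne_zero
  rw [Δ_eq] at this
  exact this (by linear_combination -32 * a ^ 3 * h2)

theorem nonsingular_iff_sq_eq [(quarticTwist a).IsElliptic] {x y : K} :
    (quarticTwist a).toAffine.Nonsingular x y ↔ y ^ 2 = x ^ 3 + a * x := by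
  rw [← equation_iff_nonsingular, equation_iff]

variable [DecidableEq K]

theorem slope_neg_mul (hi : i ^ 2 = -1) (x₁ x₂ y₁ y₂ : K) :
    (quarticTwist a).toAffine.slope (-x₁) (-x₂) (i * y₁) (i * y₂) =
      -i * (quarticTwist a).toAffine.slope x₁ x₂ y₁ y₂ := by
  have hi0 := ne_zero_of_sq_eq_neg_one hi
  have hinv : i⁻¹ = -i := by
    field_simp
    linear_combination hi
  simp only [Affine.slope, negY_eq, neg_inj, ← mul_neg, mul_right_inj' hi0]
  split_ifs
  · rw [mul_zero]
  · simp only [quarticTwist_a₁, quarticTwist_a₂, quarticTwist_a₄, neg_sq, ← mul_sub, div_eq_mul_inv,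
      mul_inv, hinv]
    ring
  · rw [← mul_sub, ← neg_sub', div_neg, mul_div_assoc, neg_mul]

/-- The endomorphism `(x, y) ↦ (-x, iy)` of `y² = x³ + ax`, giving the complex multiplication by
`ℤ[i]`, for a square root `i` of `-1`. -/
def mulI (a : K) (hi : i ^ 2 = -1) :
    (quarticTwist a).toAffine.Point →+ (quarticTwist a).toAffine.Point where
  toFun
    | 0 => 0
    | .some _ _ h => .some _ _ (nonsingular_neg_mul hi h)
  map_zero' := rfl
  map_add' := by
    have hi0 := ne_zero_of_sq_eq_neg_one hi
    rintro (_ | ⟨x₁, y₁, h₁⟩) (_ | ⟨x₂, y₂, h₂⟩)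
    any_goals rfl
    have hiff : (-x₁ = -x₂ ∧ i * y₁ = (quarticTwist a).toAffine.negY (-x₂) (i * y₂)) ↔
        x₁ = x₂ ∧ y₁ = (quarticTwist a).toAffine.negY x₂ y₂ := by
      rw [negY_eq, negY_eq, neg_inj, ← mul_neg, mul_right_inj' hi0]
    by_cases hxy : x₁ = x₂ ∧ y₁ = (quarticTwist a).toAffine.negY x₂ y₂
    · rw [Point.add_of_Y_eq hxy.1 hxy.2, Point.add_of_Y_eq (hiff.2 hxy).1 (hiff.2 hxy).2]
    · rw [Point.add_some hxy, Point.add_some (mt hiff.1 hxy)]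
      have hl := slope_neg_mul (a := a) hi x₁ x₂ y₁ y₂
      simp only [Point.some.injEq, hl, addX, addY, negAddY, negY_eq, quarticTwist_a₁,
        quarticTwist_a₂]
      constructor
      · linear_combination -(quarticTwist a).toAffine.slope x₁ x₂ y₁ y₂ ^ 2 * hi
      · linear_combination -i * (quarticTwist a).toAffine.slope x₁ x₂ y₁ y₂ ^ 3 * hi

theorem mulI_some (hi : i ^ 2 = -1) {x y : K} (h : (quarticTwist a).toAffine.Nonsingular x y) :
    mulI a hi (.some x y h) = .some (-x) (i * y) (nonsingular_neg_mul hi h) :=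
  rfl

theorem mulI_mulI (hi : i ^ 2 = -1) (P : (quarticTwist a).toAffine.Point) :
    mulI a hi (mulI a hi P) = -P := by
  rcases P with _ | ⟨x, y, h⟩
  · rfl
  · simp only [mulI_some, Point.neg_some, negY_eq, Point.some.injEq]
    exact ⟨neg_neg x, by linear_combination y * hi⟩

/-- The endomorphism `1 + i` of `y² = x³ + ax`, the isogeny of degree two along which the descent
is carried out. -/
def mulOneAddI (a : K) (hi : i ^ 2 = -1) :
    (quarticTwist a).toAffine.Point →+ (quarticTwist a).toAffine.Point :=
  AddMonoidHom.id _ + mulI a hi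

theorem mulOneAddI_apply (hi : i ^ 2 = -1) (P : (quarticTwist a).toAffine.Point) :
    mulOneAddI a hi P = P + mulI a hi P :=
  rfl

theorem range_two_nsmul_eq_range_mulOneAddI_comp (hi : i ^ 2 = -1) :
    (nsmulAddMonoidHom (α := (quarticTwist a).toAffine.Point) 2).range =
      ((mulOneAddI a hi).comp (mulOneAddI a hi)).range := by
  have hcomp (P) : mulOneAddI a hi (mulOneAddI a hi P) = 2 • mulI a hi P := by
    simp only [mulOneAddI_apply, map_add, mulI_mulI]
    abel
  ext P
  constructor
  · rintro ⟨Q, rfl⟩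
    exact ⟨mulI a hi (-Q), by simp [hcomp, mulI_mulI]⟩
  · rintro ⟨Q, rfl⟩
    exact ⟨mulI a hi Q, (hcomp Q).symm⟩

variable [(quarticTwist a).IsElliptic]

-- A preimage is the point with `x`-coordinate `u = i(s² + w)`, a root of `u² - 2is²u + a`.
theorem some_mem_range_mulOneAddI (hi : i ^ 2 = -1) {x y s w : K}
    (h : (quarticTwist a).toAffine.Nonsingular x y) (hx : x = s ^ 2) (hy : y = s * w)
    (hw : w ^ 2 = s ^ 4 + a) : Point.some x y h ∈ (mulOneAddI a hi).range := by
  subst hx hy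
  have ha : a ≠ 0 := ne_zero_of_isElliptic
  have h2 : (2 : K) ≠ 0 := two_ne_zero_of_isElliptic (a := a)
  obtain ⟨u, hu⟩ : ∃ u, u = i * (s ^ 2 + w) := ⟨_, rfl⟩
  have hquad : u ^ 2 + a = 2 * i * s ^ 2 * u := by
    rw [hu]
    linear_combination (w ^ 2 - s ^ 4) * hi - hw
  have hu0 : u ≠ 0 := fun hu0 ↦ ha (by simpa [hu0] using hquad)
  have hns : (quarticTwist a).toAffine.Nonsingular u ((1 + i) * s * u) := by
    rw [nonsingular_iff_sq_eq]
    linear_combination -u * hquad + s ^ 2 * u ^ 2 * hi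
  have hx : u ≠ -u := fun hu' ↦ mul_ne_zero h2 hu0 (by linear_combination hu')
  have hslope : (quarticTwist a).toAffine.slope u (-u) ((1 + i) * s * u) (i * ((1 + i) * s * u)) =
      s := by
    rw [slope_of_X_ne hx]
    rw [div_eq_iff (sub_ne_zero.2 hx)]
    linear_combination -s * u * hi
  refine ⟨.some _ _ hns, ?_⟩
  rw [mulOneAddI_apply, mulI_some, Point.add_of_X_ne hx]
  simp only [Point.some.injEq, hslope, addX, addY, negAddY, negY_eq, quarticTwist_a₁,
    quarticTwist_a₂]
  exact ⟨by ring, by rw [hu]; linear_combination -s * (s ^ 2 + w) * hi⟩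

theorem add_mem_range_mulOneAddI (hi : i ^ 2 = -1) {x₁ y₁ x₂ y₂ r : K}
    (h₁ : (quarticTwist a).toAffine.Nonsingular x₁ y₁)
    (h₂ : (quarticTwist a).toAffine.Nonsingular x₂ y₂) (hr : r ≠ 0) (hx : x₁ * x₂ = r ^ 2) :
    Point.some x₁ y₁ h₁ + Point.some x₂ y₂ h₂ ∈ (mulOneAddI a hi).range := by
  by_cases hxy : x₁ = x₂ ∧ y₁ = (quarticTwist a).toAffine.negY x₂ y₂
  · rw [Point.add_of_Y_eq hxy.1 hxy.2]
    exact zero_mem _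
  obtain ⟨hsum, hprod⟩ := vieta_addX_slope h₁.1 h₂.1 hxy
  rw [Point.add_some hxy]
  set l := (quarticTwist a).toAffine.slope x₁ x₂ y₁ y₂
  -- The line `y = lx + m` through the two points meets the curve again at `x₃` with
  -- `x₁x₂x₃ = m²`, so `x₃` is the square of `s = m / r`.
  obtain ⟨s, hs⟩ : ∃ s, y₁ - l * x₁ = s * r := ⟨(y₁ - l * x₁) / r, by field_simp⟩
  simp only [quarticTwist_a₁, quarticTwist_a₃, quarticTwist_a₄, quarticTwist_a₆] at hsum hprod
  have hX : (quarticTwist a).toAffine.addX x₁ x₂ l = s ^ 2 := by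
    refine mul_left_cancel₀ (pow_ne_zero 2 hr) ?_
    linear_combination hprod - (quarticTwist a).toAffine.addX x₁ x₂ l * hx +
      (y₁ - l * x₁ + s * r) * hs
  have hX' : s ^ 2 = l ^ 2 - x₁ - x₂ := by simp [← hX, addX]
  refine some_mem_range_mulOneAddI (w := -(l * s + r)) hi _ hX ?_ ?_
  · rw [addY, negAddY, negY_eq, hX]
    linear_combination -hs
  · rw [hX] at hsum
    linear_combination hsum - s ^ 2 * hX' - hx - 2 * l * hs

/-- The points of `y² = x³ + ax` whose `x`-coordinate is `e` times a nonzero square. -/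
def squareClass (a e : K) : Set (quarticTwist a).toAffine.Point :=
  {P | ∃ x y h r, P = .some x y h ∧ r ≠ 0 ∧ x = e * r ^ 2}

theorem sub_mem_range_mulOneAddI_of_mem_squareClass (hi : i ^ 2 = -1) {e : K}
    {P Q : (quarticTwist a).toAffine.Point} (hP : P ∈ squareClass a e) (hQ : Q ∈ squareClass a e) :
    P - Q ∈ (mulOneAddI a hi).range := by
  obtain ⟨x, y, h, r, rfl, hr, hx⟩ := hP
  obtain ⟨x', y', h', r', rfl, hr', hx'⟩ := hQ
  by_cases he : e = 0
  · rw [he, zero_mul] at hx hx'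
    have eq_zero {y : K} (h : (quarticTwist a).toAffine.Nonsingular 0 y) : y = 0 := by
      simpa [nonsingular_iff_sq_eq] using h
    subst hx hx'
    obtain rfl := (eq_zero h).trans (eq_zero h').symm
    rw [sub_self]
    exact zero_mem _
  · rw [sub_eq_add_neg, Point.neg_some]
    refine add_mem_range_mulOneAddI hi _ _ (mul_ne_zero (mul_ne_zero he hr) hr') ?_
    rw [hx, hx']
    ring

theorem finiteIndex_range_mulOneAddI (hi : i ^ 2 = -1) {S : Set K} (hS : S.Finite)
    (hcover : ∀ x y, y ^ 2 = x ^ 3 + a * x → ∃ e ∈ S, ∃ r, r ≠ 0 ∧ x = e * r ^ 2) :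
    (mulOneAddI a hi).range.FiniteIndex := by
  refine finiteIndex_of_finite_cover (((hS.image (squareClass a)).insert {0})) ?_ ?_
  · rintro (_ | ⟨x, y, h⟩)
    · exact ⟨_, Set.mem_insert _ _, rfl⟩
    · obtain ⟨e, he, r, hr, hx⟩ := hcover x y (nonsingular_iff_sq_eq.1 h)
      exact ⟨_, Set.mem_insert_of_mem _ ⟨e, he, rfl⟩, x, y, h, r, rfl, hr, hx⟩
  · rintro _ (rfl | ⟨e, -, rfl⟩) P hP Q hQ
    · rw [hP, hQ, sub_self]
      exact zero_mem _
    · exact sub_mem_range_mulOneAddI_of_mem_squareClass hi hP hQ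

theorem finiteIndex_range_two_nsmul (hi : i ^ 2 = -1) {S : Set K} (hS : S.Finite)
    (hcover : ∀ x y, y ^ 2 = x ^ 3 + a * x → ∃ e ∈ S, ∃ r, r ≠ 0 ∧ x = e * r ^ 2) :
    (nsmulAddMonoidHom (α := (quarticTwist a).toAffine.Point) 2).range.FiniteIndex := by
  have hφ := finiteIndex_range_mulOneAddI hi hS hcover
  rw [range_two_nsmul_eq_range_mulOneAddI_comp hi]
  exact finiteIndex_range_comp hφ hφ

end quarticTwist

end QuarticTwist

section SquareClasses

theorem exists_eq_mul_sq_of_mul_eq_sq {M : Type*} [CommMonoidWithZero M]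
    [UniqueFactorizationMonoid M] {m n c : M} (hm : m ≠ 0) (h : m * n = c ^ 2) :
    ∃ g d, g ∣ m ∧ g ∣ n ∧ m = g * d ^ 2 := by
  classical
  let := UniqueFactorizationMonoid.toGCDMonoid M
  obtain ⟨m', n', hm', hn', hunit⟩ := extract_gcd m n
  set g := gcd m n
  have hg : g ≠ 0 := left_ne_zero_of_mul (hm' ▸ hm)
  have hgc : g ∣ c := by
    refine (UniqueFactorizationMonoid.pow_dvd_pow_iff_dvd two_ne_zero).1 ?_
    rw [← h, sq]
    exact mul_dvd_mul (gcd_dvd_left m n) (gcd_dvd_right m n)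
  obtain ⟨c', rfl⟩ := hgc
  have hcoprime : m' * n' = c' ^ 2 := by
    refine mul_left_cancel₀ (pow_ne_zero 2 hg) ?_
    rw [← mul_pow, ← h, hm', hn', sq, mul_mul_mul_comm]
  obtain ⟨d, u, hd⟩ := exists_associated_pow_of_mul_eq_pow hunit hcoprime
  refine ⟨g * u, d, Units.mul_right_dvd.2 (gcd_dvd_left m n),
    Units.mul_right_dvd.2 (gcd_dvd_right m n), ?_⟩
  rw [mul_right_comm, mul_assoc, hd, hm']

variable {O : Type*} [CommRing O] [UniqueFactorizationMonoid O]

theorem dvd_of_dvd_mul_of_dvd_mul_add {p q A B g : O} (hpq : IsRelPrime p q) (hg : g ∣ p * q)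
    (hg' : g ∣ B * (p ^ 2 * B + A * q ^ 2)) : g ∣ A * B * B ^ 2 := by
  classical
  let := UniqueFactorizationMonoid.toGCDMonoid O
  obtain ⟨g₁, g₂, hg₁, hg₂, rfl⟩ := exists_dvd_and_dvd_of_dvd_mul hg
  apply mul_dvd_mul
  · have hdvd : g₁ ∣ A * B * q ^ 2 := by
      have := dvd_sub ((dvd_mul_right g₁ g₂).trans hg') (hg₁.mul_left (B ^ 2 * p))
      ring_nf at this ⊢
      exact this
    exact (hpq.of_dvd_left hg₁).pow_right.dvd_of_dvd_mul_right hdvd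
  · have hdvd : g₂ ∣ B ^ 2 * p ^ 2 := by
      have := dvd_sub ((dvd_mul_left g₂ g₁).trans hg') (hg₂.mul_left (B * A * q))
      ring_nf at this ⊢
      exact this
    exact (hpq.symm.of_dvd_left hg₂).pow_right.dvd_of_dvd_mul_right hdvd

variable [IsDomain O] {K : Type*} [Field K] [Algebra O K] [IsFractionRing O K]

theorem exists_dvd_of_sq_eq_cube_add {A B : O} (hB : B ≠ 0) {x y : K} (hx : x ≠ 0)
    (hxy : y ^ 2 = x ^ 3 + algebraMap O K A / algebraMap O K B * x) :
    ∃ e, e ∣ A * B * B ^ 2 ∧ ∃ r : K, r ≠ 0 ∧ x = algebraMap O K e * r ^ 2 := by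
  obtain ⟨p, ⟨q, hq⟩, hpq, rfl⟩ := IsFractionRing.exists_reduced_fraction (A := O) x
  rw [IsFractionRing.mk'_eq_div] at hx hxy ⊢
  simp only at hpq hx hxy ⊢
  have hBK : algebraMap O K B ≠ 0 := by simpa using hB
  obtain ⟨hpK, hqK⟩ := div_ne_zero_iff.1 hx
  have hpq0 : p * q ≠ 0 := mul_ne_zero (by simpa using hpK) (by simpa using hqK)
  obtain ⟨c, hc⟩ : ∃ c, p * q * (B * (p ^ 2 * B + A * q ^ 2)) = c ^ 2 := by
    have hcK : algebraMap O K (p * q * (B * (p ^ 2 * B + A * q ^ 2))) =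
        (algebraMap O K q ^ 2 * algebraMap O K B * y) ^ 2 := by
      rw [mul_pow, hxy]
      simp only [map_mul, map_add, map_pow]
      field_simp
    obtain ⟨c, hc⟩ := IsIntegrallyClosed.exists_algebraMap_eq_of_isIntegral_pow (R := O)
      two_pos (hcK ▸ isIntegral_algebraMap)
    refine ⟨c, IsFractionRing.injective O K ?_⟩
    rw [hcK, map_pow, hc]
  obtain ⟨g, d, hg, hg', hgd⟩ := exists_eq_mul_sq_of_mul_eq_sq hpq0 hc
  have hgdK := congrArg (algebraMap O K) hgd
  rw [map_mul, map_mul, map_pow] at hgdK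
  refine ⟨g, dvd_of_dvd_mul_of_dvd_mul_add hpq hg hg', algebraMap O K d / algebraMap O K q, ?_, ?_⟩
  · refine div_ne_zero (fun hd ↦ mul_ne_zero hpK hqK ?_) hqK
    rw [hgdK, hd, zero_pow two_ne_zero, mul_zero]
  · field_simp
    linear_combination hgdK

variable (O) in
theorem exists_finite_squareClass_representatives [Finite Oˣ] {a : K} (ha : a ≠ 0) :
    ∃ S : Set K, S.Finite ∧
      ∀ x y, y ^ 2 = x ^ 3 + a * x → ∃ e ∈ S, ∃ r, r ≠ 0 ∧ x = e * r ^ 2 := by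
  obtain ⟨A, B, hB, rfl⟩ := IsFractionRing.div_surjective (A := O) a
  have hB : B ≠ 0 := nonZeroDivisors.ne_zero hB
  have hA : A ≠ 0 := by simpa using (div_ne_zero_iff.1 ha).1
  have := Fintype.ofFinite Oˣ
  have := UniqueFactorizationMonoid.fintypeSubtypeDvd (A * B * B ^ 2)
    (mul_ne_zero (mul_ne_zero hA hB) (pow_ne_zero 2 hB))
  have hfin : {e | e ∣ A * B * B ^ 2}.Finite := Finite.of_fintype {e // e ∣ A * B * B ^ 2}
  refine ⟨insert 0 (algebraMap O K '' {e | e ∣ A * B * B ^ 2}), (hfin.image _).insert 0,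
    fun x y hxy ↦ ?_⟩
  by_cases hx : x = 0
  · exact ⟨0, Set.mem_insert _ _, 1, one_ne_zero, by rw [hx, zero_mul]⟩
  · obtain ⟨e, he, r, hr, hxr⟩ := exists_dvd_of_sq_eq_cube_add hB hx hxy
    exact ⟨_, Set.mem_insert_of_mem _ ⟨e, he, rfl⟩, r, hr, hxr⟩

end SquareClasses

section GaussianField

theorem QIi_sq : QIi ^ 2 = -1 :=
  Subtype.ext (by simp [QIi])

instance numberField_QI : NumberField QI where
  to_finiteDimensional := IntermediateField.adjoin.finiteDimensional
    ⟨Polynomial.X ^ 2 + 1, by monicity!, by simp⟩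

theorem toComplex_mem_QI (z : GaussianInt) : z.toComplex ∈ QI := by
  have hI : Complex.I ∈ QI := IntermediateField.mem_adjoin_simple_self ℚ Complex.I
  rw [GaussianInt.toComplex_def]
  exact add_mem (intCast_mem _ _) (mul_mem (intCast_mem _ _) hI)

/-- The algebra structure given by the inclusion of `ℤ[i]` in `ℚ(i)`. -/
instance algebraQI : Algebra GaussianInt QI :=
  (GaussianInt.toComplex.codRestrict QI toComplex_mem_QI).toAlgebra

theorem exists_toComplex_div_eq {x : ℂ} (hx : x ∈ QI) :
    ∃ z w : GaussianInt, z.toComplex / w.toComplex = x := by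
  let φ : FractionRing GaussianInt →+* ℂ :=
    IsFractionRing.lift (g := GaussianInt.toComplex) GaussianInt.toComplex_injective
  have hφ (z : GaussianInt) : φ (algebraMap _ _ z) = z.toComplex :=
    IsFractionRing.lift_algebraMap ..
  have hx : x ∈ φ.fieldRange := by
    induction hx using IntermediateField.adjoin_induction with
    | mem x hx => exact ⟨algebraMap _ _ gi, by rw [hφ, hx]; simp [gi, GaussianInt.toComplex_def]⟩
    | algebraMap q => exact ⟨q, by simp⟩
    | add x y _ _ hx hy => exact add_mem hx hy
    | inv x _ hx => exact inv_mem hx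
    | mul x y _ _ hx hy => exact mul_mem hx hy
  obtain ⟨t, rfl⟩ := hx
  obtain ⟨z, w, -, rfl⟩ := IsFractionRing.div_surjective (A := GaussianInt) t
  exact ⟨z, w, by rw [map_div₀, hφ, hφ]⟩

instance isFractionRing_QI : IsFractionRing GaussianInt QI := by
  have hinj : Function.Injective (algebraMap GaussianInt QI) := fun z w h ↦
    GaussianInt.toComplex_injective (congrArg Subtype.val h)
  have := (faithfulSMul_iff_algebraMap_injective _ _).2 hinj
  refine IsFractionRing.of_field GaussianInt QI fun x ↦ ?_
  obtain ⟨z, w, h⟩ := exists_toComplex_div_eq x.2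
  exact ⟨z, w, Subtype.ext h.symm⟩

instance finite_units_gaussianInt : Finite GaussianIntˣ := by
  have hmem (u : GaussianIntˣ) :
      (u : GaussianInt).re ∈ Set.Icc (-1) 1 ∧ (u : GaussianInt).im ∈ Set.Icc (-1) 1 := by
    have hnorm := (Zsqrtd.norm_eq_one_iff' (by norm_num) _).2 u.isUnit
    rw [Zsqrtd.norm_def] at hnorm
    simp only [Set.mem_Icc]
    refine ⟨⟨?_, ?_⟩, ?_, ?_⟩ <;>
      nlinarith [mul_self_nonneg (u : GaussianInt).re, mul_self_nonneg (u : GaussianInt).im]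
  refine Finite.of_injective (β := Set.Icc (-1 : ℤ) 1 × Set.Icc (-1 : ℤ) 1)
    (fun u ↦ (⟨_, (hmem u).1⟩, ⟨_, (hmem u).2⟩)) fun u v h ↦ ?_
  simp only [Prod.mk.injEq, Subtype.mk.injEq] at h
  exact Units.ext (Zsqrtd.ext h.1 h.2)

end GaussianField

section EvenRank

theorem even_finrank_of_mul_self_eq_neg_one {A M : Type*} [CommRing A] [AddCommGroup M] [Module A M]
    [Module.Free A M] (hA : ¬IsSquare (-1 : A)) {f : Module.End A M} (hf : f * f = -1) :
    Even (Module.finrank A M) := by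
  by_contra hodd
  rw [Nat.not_even_iff_odd] at hodd
  have hdet := congrArg LinearMap.det hf
  rw [map_mul, ← neg_one_smul A, LinearMap.det_smul, map_one, mul_one, hodd.neg_one_pow] at hdet
  exact hA ⟨_, hdet.symm⟩

theorem even_finrank_rat_tensor {A : Type*} [AddCommGroup A] (j : A →+ A)
    (hj : ∀ x, j (j x) = -x) : Even (Module.finrank ℚ (ℚ ⊗[ℤ] A)) := by
  have hsq : ¬IsSquare (-1 : ℚ) := fun h ↦ absurd h.nonneg (by norm_num)
  refine even_finrank_of_mul_self_eq_neg_one hsq (f := j.toIntLinearMap.baseChange ℚ) ?_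
  ext x
  simp [hj, TensorProduct.tmul_neg]

end EvenRank

/-- for nonzero `α ∈ ℚ(i)`, the rank of `E_α(ℚ(i))`, i.e. the dimension of the
`ℚ`-vector space `E_α(ℚ(i)) ⊗_ℤ ℚ`, is an even natural number. -/
theorem stmt17 (α : QI) (hα : α ≠ 0) :
    ∃ n : ℕ, Even n ∧ Module.rank ℚ (ℚ ⊗[ℤ] (Ecurve α).toAffine.Point) = n := by
  have := quarticTwist.isElliptic hα two_ne_zero
  obtain ⟨S, hS, hcover⟩ := exists_finite_squareClass_representatives GaussianInt hα
  have hfg : AddGroup.FG (quarticTwist α).toAffine.Point := fg_point_of_finiteIndex_two_nsmul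
    (quarticTwist.finiteIndex_range_two_nsmul QIi_sq hS hcover)
  have : Module.Finite ℤ (Ecurve α).toAffine.Point := Module.Finite.iff_addGroup_fg.2 hfg
  exact ⟨_, even_finrank_rat_tensor (quarticTwist.mulI α QIi_sq) (quarticTwist.mulI_mulI QIi_sq),
    (Module.finrank_eq_rank ℚ _).symm⟩
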